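/- Let P_1,…,P_n ∈ ℝ^{3×4} be camera matrices, let (u_i, v_i) ∈ ℝ² be 2D observations whose DLT matrix A = A({u_i, v_i, P_i}) satisfies σ_min(A) = 0, and let ε ∈ ℝ^{2n} be a perturbation vector with perturbed observations (u_i*, v_i*) = (u_i + ε_{2i}, v_i + ε_{2i+1}) and perturbed DLT matrix A* = A({u_i*, v_i*, P_i}). Then σ_min(A*) ≤ ‖P̃‖₂ · Σ_{i=0}^{2n−1} |ε_i|, where P̃ ∈ ℝ^{2n×4} is the matrix whose rows 2i and 2i+1 both equal the third row p_i^{3T} of P_i. -/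

import Mathlib

/-!
Write `A` and `A*` for the unperturbed and perturbed DLT matrices. The entries of the
DLT matrix are affine in the observations, so `A* x = A x + D P̃ x` with `D` the diagonal
matrix of the entries of `ε`.
Since `|ε r| ≤ ∑ |ε i|` for every row `r`, every unit vector `x` satisfies
`‖A* x‖ ≤ ‖A x‖ + ‖P̃‖ ∑ |ε i|`; taking the infimum over `x` and using `σ_min(A) = 0` gives the
bound. In particular it is not needed that the infimum defining `σ_min(A)` is attained.
-/

open Matrix

/-- The DLT matrix associated with cameras `P i` and 2D observations `(u i, v i)`:
its rows (indexed by `(i, 0)` and `(i, 1)`, corresponding to rows `2i` and `2i+1`) are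
`u i • p_i^{3T} - p_i^{1T}` and `v i • p_i^{3T} - p_i^{2T}`. -/
def DLT {n : ℕ} (P : Fin n → Matrix (Fin 3) (Fin 4) ℝ) (u v : Fin n → ℝ) :
    Matrix (Fin n × Fin 2) (Fin 4) ℝ := fun r j =>
  if r.2 = 0 then u r.1 * P r.1 2 j - P r.1 0 j
  else v r.1 * P r.1 2 j - P r.1 1 j

/-- The matrix `P̃ ∈ ℝ^{2n×4}` whose rows `2i` and `2i+1` (indexed by `(i,0)` and `(i,1)`)
both equal the third row `p_i^{3T}` of `P i`. -/
def Ptilde {n : ℕ} (P : Fin n → Matrix (Fin 3) (Fin 4) ℝ) :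
    Matrix (Fin n × Fin 2) (Fin 4) ℝ := fun r j => P r.1 2 j

/-- The smallest singular value `σ_min(M) = inf_{‖x‖=1} ‖M x‖`, with Euclidean norms. -/
noncomputable def sigmaMin {ι : Type*} [Fintype ι] (M : Matrix ι (Fin 4) ℝ) : ℝ :=
  ⨅ x : {x : EuclideanSpace ℝ (Fin 4) // ‖x‖ = 1}, ‖Matrix.toEuclideanLin M x.1‖

/-- The operator norm `‖M‖₂` induced by the Euclidean norms. -/
noncomputable def opNorm {ι κ : Type*} [Fintype ι] [Fintype κ] [DecidableEq κ]
    (M : Matrix ι κ ℝ) : ℝ :=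
  ‖LinearMap.toContinuousLinearMap (Matrix.toEuclideanLin M)‖

/-- Scaling the coordinates of `y` by the entries of `ε` multiplies its Euclidean norm by at most
`∑ i, |ε i|`, because this sum dominates every `|ε r|`. -/
lemma norm_toLp_mul_le {ι : Type*} [Fintype ι] (ε : ι → ℝ) (y : EuclideanSpace ℝ ι) :
    ‖(WithLp.toLp 2 (fun r => ε r * y r) : EuclideanSpace ℝ ι)‖ ≤ ‖y‖ * ∑ i, |ε i| := by
  have hS : 0 ≤ ∑ i, |ε i| := Finset.sum_nonneg fun i _ => abs_nonneg _
  refine le_of_sq_le_sq ?_ (by positivity)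
  rw [mul_pow, EuclideanSpace.norm_sq_eq, EuclideanSpace.norm_sq_eq, Finset.sum_mul]
  refine Finset.sum_le_sum fun r _ => ?_
  have h : |ε r| ≤ ∑ i, |ε i| :=
    Finset.single_le_sum (f := fun i => |ε i|) (fun i _ => abs_nonneg _) (Finset.mem_univ r)
  simp only [norm_mul, mul_pow, Real.norm_eq_abs]
  rw [mul_comm]
  gcongr

lemma toEuclideanLin_DLT_add {n : ℕ} (P : Fin n → Matrix (Fin 3) (Fin 4) ℝ) (u v : Fin n → ℝ)
    (ε : Fin n × Fin 2 → ℝ) (x : EuclideanSpace ℝ (Fin 4)) :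
    Matrix.toEuclideanLin (DLT P (fun i => u i + ε (i, 0)) (fun i => v i + ε (i, 1))) x =
      Matrix.toEuclideanLin (DLT P u v) x +
        WithLp.toLp 2 (fun r => ε r * Matrix.toEuclideanLin (Ptilde P) x r) := by
  ext ⟨i, k⟩
  fin_cases k <;>
    simp [Matrix.toLpLin_apply, Matrix.mulVec, dotProduct, DLT, Ptilde, Finset.mul_sum,
      ← Finset.sum_add_distrib] <;>
    exact Finset.sum_congr rfl fun j _ => by ring

/-- If the unperturbed DLT matrix `A` satisfies `σ_min(A) = 0`, then the DLT matrix
`A*` of the perturbed observations `(u i + ε (i,0), v i + ε (i,1))` satisfies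
`σ_min(A*) ≤ ‖P̃‖₂ · Σ_i |ε_i|`. -/
theorem sigmaMin_perturbed_le {n : ℕ}
    (P : Fin n → Matrix (Fin 3) (Fin 4) ℝ) (u v : Fin n → ℝ)
    (hA : sigmaMin (DLT P u v) = 0)
    (ε : Fin n × Fin 2 → ℝ) :
    sigmaMin (DLT P (fun i => u i + ε (i, 0)) (fun i => v i + ε (i, 1))) ≤
      opNorm (Ptilde P) * ∑ i : Fin n × Fin 2, |ε i| := by
  -- A real infimum over an empty type is the junk value `0`, so the lower bound below
  -- requires that the unit sphere be nonempty.
  have : Nonempty {x : EuclideanSpace ℝ (Fin 4) // ‖x‖ = 1} :=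
    ⟨⟨EuclideanSpace.single 0 1, by simp⟩⟩
  rw [← sub_nonpos, ← hA]
  refine le_ciInf fun x => ?_
  rw [sub_le_iff_le_add]
  have hbdd : BddBelow (Set.range fun x : {x : EuclideanSpace ℝ (Fin 4) // ‖x‖ = 1} =>
      ‖Matrix.toEuclideanLin
        (DLT P (fun i => u i + ε (i, 0)) (fun i => v i + ε (i, 1))) x.1‖) :=
    ⟨0, by rintro _ ⟨y, rfl⟩; exact norm_nonneg _⟩
  refine (ciInf_le hbdd x).trans ?_
  have hP : ‖Matrix.toEuclideanLin (Ptilde P) x.1‖ ≤ opNorm (Ptilde P) := by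
    simpa [x.2, opNorm] using
      (LinearMap.toContinuousLinearMap (Matrix.toEuclideanLin (Ptilde P))).le_opNorm x.1
  rw [toEuclideanLin_DLT_add]
  refine (norm_add_le _ _).trans (add_le_add le_rfl ?_)
  exact (norm_toLp_mul_le ε _).trans
    (mul_le_mul_of_nonneg_right hP (Finset.sum_nonneg fun i _ => abs_nonneg _))
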